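/- Let n ≥ 5 be an integer and let L be the Laplacian matrix of the Kneser graph K(n,2): the square integer matrix indexed by the 2-element subsets of {1,…,n} with L(A,A) = C(n−2,2), L(A,B) = −1 when A ∩ B = ∅, and L(A,B) = 0 when |A ∩ B| = 1. Let a, b, c be the natural numbers determined by 2a = (n−1)(n−4), 4b = (n−1)(n−3)(n−4)n, and 2c = (n−3)(n−4). Then there is an isomorphism of abelian groups S(L) ≅ ℤ ⊕ (ℤ/aℤ)^{C(n,2)−2n+1} ⊕ (ℤ/bℤ)^{n−2} ⊕ ℤ/cℤ. -/

import Mathlib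

open scoped Classical

/-- The `k`-element subsets of `{1,…,n}`. -/
def ksubsets (n k : ℕ) : Finset (Finset ℕ) :=
  (Finset.Icc 1 n).powerset.filter fun A => A.card = k

/-- The Smith group of an integer matrix. -/
abbrev SmithGroup {ρ γ : Type*} (M : Matrix ρ γ ℤ) : Type _ :=
  (γ → ℤ) ⧸ Submodule.span ℤ (Set.range fun r : ρ => M r)

/-- The Laplacian of the Kneser graph `K(n,2)`: diagonal entry `C(n−2,2)`, entry `−1`
between disjoint 2-subsets, `0` between distinct 2-subsets meeting in one point. -/
noncomputable def kneserLap (n : ℕ) : Matrix ↥(ksubsets n 2) ↥(ksubsets n 2) ℤ :=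
  Matrix.of fun A B =>
    if A = B then ((n - 2).choose 2 : ℤ)
    else if (A : Finset ℕ) ∩ (B : Finset ℕ) = ∅ then -1
    else 0

/-!
The Smith group is generated by elements `e P`, one for each pair `P`, subject to the relations
`a • e B + ∑ i ∈ B, ∑ j ≠ i, e {i, j} = ∑ P, e P`. Fix a root vertex `α` and a pair `g` avoiding
it, and write `e P = z P + ∑ i ∈ P, x i - y`, normalized by `x α = 0`, `z {α, i} = 0` and `z g = 0`.
The relations then say that `a • z P = 0`, that `∑ j, z {i, j}` is a fixed multiple of `x i`, and
that `∑ P, z P` is a fixed multiple of `∑ i, x i`, while `y` is free. A second root `β` eliminates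
the `z {β, i}`: what is left is that each remaining `x i` is killed by `b`, that the sum `σ` of all
the `x i` is killed by `c`, and that the sum of the remaining `z P` is prescribed, which determines
`z f` for one pair `f`. Hence homomorphisms out of the Smith group correspond naturally to free
choices of `y`, of `a`-torsion elements `z P`, of `b`-torsion elements `x i` and of a `c`-torsion
element `σ`, which are also the homomorphisms out of the product of cyclic groups.
-/

section PairSums

open Finset

variable {ι A : Type*} [DecidableEq ι] [AddCommGroup A] {s : Finset ι} {α i : ι}

/-- The sum of a function on pairs over the pairs of elements of `s` that contain `i`. -/
def starSum (s : Finset ι) (f : Finset ι → A) (i : ι) : A :=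
  ∑ j ∈ s.erase i, f {i, j}

lemma starSum_congr {f f' : Finset ι → A} (h : ∀ P ∈ s.powersetCard 2, f P = f' P) (hi : i ∈ s) :
    starSum s f i = starSum s f' i := by
  refine sum_congr rfl fun j hj => h _ ?_
  rw [mem_erase] at hj
  exact mem_powersetCard.2 ⟨insert_subset hi (singleton_subset_iff.2 hj.2), card_pair hj.1.symm⟩

lemma map_starSum {B : Type*} [AddCommGroup B] (φ : A →+ B) (f : Finset ι → A) (i : ι) :
    φ (starSum s f i) = starSum s (fun P => φ (f P)) i :=
  map_sum φ _ _

lemma starSum_insert_self (hα : α ∉ s) (f : Finset ι → A) :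
    starSum (insert α s) f α = ∑ i ∈ s, f {α, i} := by
  rw [starSum, erase_insert hα]

lemma starSum_insert_of_mem (hα : α ∉ s) (hi : i ∈ s) (f : Finset ι → A) :
    starSum (insert α s) f i = f {α, i} + starSum s f i := by
  have hαi : α ≠ i := fun h => hα (h ▸ hi)
  rw [starSum, erase_insert_of_ne hαi, sum_insert fun h => hα (mem_of_mem_erase h), pair_comm,
    starSum]

lemma powersetCard_two_insert (hα : α ∉ s) :
    (insert α s).powersetCard 2 = s.powersetCard 2 ∪ s.image fun i => {α, i} := by
  rw [powersetCard_succ_insert hα, powersetCard_one, map_eq_image, image_image]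
  rfl

lemma forall_mem_powersetCard_two_insert (hα : α ∉ s) {p : Finset ι → Prop} :
    (∀ P ∈ (insert α s).powersetCard 2, p P) ↔
      (∀ i ∈ s, p {α, i}) ∧ ∀ P ∈ s.powersetCard 2, p P := by
  simp only [powersetCard_two_insert hα, forall_mem_union, forall_mem_image, and_comm]

omit [DecidableEq ι] in
lemma notMem_of_mem_powersetCard {k : ℕ} (hα : α ∉ s) {P : Finset ι}
    (hP : P ∈ s.powersetCard k) : α ∉ P :=
  fun h => hα ((mem_powersetCard.1 hP).1 h)

lemma sum_powersetCard_two_insert (hα : α ∉ s) (f : Finset ι → A) :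
    ∑ P ∈ (insert α s).powersetCard 2, f P =
      ∑ i ∈ s, f {α, i} + ∑ P ∈ s.powersetCard 2, f P := by
  have hdisj : Disjoint (s.powersetCard 2) (s.image fun i => {α, i}) := by
    refine disjoint_right.2 (forall_mem_image.2 fun i _ hP => ?_)
    exact notMem_of_mem_powersetCard hα hP (mem_insert_self α {i})
  have hinj : Set.InjOn (fun i => ({α, i} : Finset ι)) s := by
    intro i hi j _ hij
    have hi' : i ∈ ({α, j} : Finset ι) := (Finset.ext_iff.1 hij i).1 (by simp)
    rcases mem_insert.1 hi' with rfl | hi'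
    · exact absurd hi hα
    · exact mem_singleton.1 hi'
  rw [powersetCard_two_insert hα, sum_union hdisj, sum_image hinj, add_comm]

lemma exists_extend_pairs (hα : α ∉ s) (f : Finset ι → A) (q : ι → A) :
    ∃ f' : Finset ι → A, (∀ i ∈ s, f' {α, i} = q i) ∧ ∀ P ∈ s.powersetCard 2, f' P = f P := by
  refine ⟨fun P => if α ∈ P then ∑ i ∈ P.erase α, q i else f P, fun i hi => ?_, fun P hP => ?_⟩
  · have hαi : α ∉ ({i} : Finset ι) := fun h => hα (mem_singleton.1 h ▸ hi)
    simp [erase_insert hαi]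
  · simp [notMem_of_mem_powersetCard hα hP]

lemma sum_starSum (s : Finset ι) (f : Finset ι → A) :
    ∑ i ∈ s, starSum s f i = (2 : ℤ) • ∑ P ∈ s.powersetCard 2, f P := by
  induction s using Finset.induction_on with
  | empty => rw [powersetCard_eq_empty.2 (by simp)]; simp
  | insert α s hα ih =>
    rw [sum_insert hα, starSum_insert_self hα, sum_powersetCard_two_insert hα,
      sum_congr rfl fun i hi => starSum_insert_of_mem hα hi f, sum_add_distrib, ih]
    module

lemma starSum_eq_sum_ite (hi : i ∈ s) (f : Finset ι → A) :
    starSum s f i = ∑ P ∈ s.powersetCard 2, if i ∈ P then f P else 0 := by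
  have hzero : ∀ P ∈ (s.erase i).powersetCard 2, (if i ∈ P then f P else 0) = 0 := fun P hP =>
    if_neg (notMem_of_mem_powersetCard (notMem_erase i s) hP)
  conv_rhs => rw [← insert_erase hi, sum_powersetCard_two_insert (notMem_erase i s),
    sum_eq_zero hzero, add_zero]
  simp [starSum]

lemma sum_card_inter_smul {R : Finset ι} (hR : R ⊆ s) (f : Finset ι → A) :
    ∑ P ∈ s.powersetCard 2, (#(R ∩ P) : ℤ) • f P = ∑ i ∈ R, starSum s f i := by
  rw [sum_congr rfl fun i hi => starSum_eq_sum_ite (hR hi) f, sum_comm]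
  refine sum_congr rfl fun P _ => ?_
  rw [sum_ite_mem, sum_const, natCast_zsmul]

omit [DecidableEq ι] in
lemma sum_powersetCard_two_sum (s : Finset ι) (x : ι → A) :
    ∑ P ∈ s.powersetCard 2, ∑ i ∈ P, x i = (#s - 1 : ℤ) • ∑ i ∈ s, x i := by
  classical
  induction s using Finset.induction_on with
  | empty => rw [powersetCard_eq_empty.2 (by simp)]; simp
  | insert α s hα ih =>
    have hpair : ∀ i ∈ s, ∑ j ∈ {α, i}, x j = x α + x i := fun i hi =>
      sum_pair fun h => hα (h ▸ hi)
    rw [sum_powersetCard_two_insert hα, ih, sum_congr rfl hpair, sum_add_distrib, sum_const,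
      sum_insert hα, card_insert_of_notMem hα, ← natCast_zsmul]
    push_cast
    module

lemma starSum_sum (hi : i ∈ s) (x : ι → A) :
    starSum s (fun P => ∑ j ∈ P, x j) i = (#s - 2 : ℤ) • x i + ∑ j ∈ s, x j := by
  have hpair : ∀ j ∈ s.erase i, ∑ l ∈ {i, j}, x l = x i + x j := fun j hj =>
    sum_pair (ne_of_mem_erase hj).symm
  rw [starSum, sum_congr rfl hpair, sum_add_distrib, sum_const, ← natCast_zsmul,
    cast_card_erase_of_mem hi, ← add_sum_erase s x hi]
  module

lemma starSum_const (hi : i ∈ s) (y : A) :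
    starSum s (fun _ => y) i = (#s - 1 : ℤ) • y := by
  rw [starSum, sum_const, ← natCast_zsmul, cast_card_erase_of_mem hi]

lemma starSum_add_sum_sub (hi : i ∈ s) (z : Finset ι → A) (x : ι → A) (y : A) :
    starSum s (fun P => z P + ∑ j ∈ P, x j - y) i =
      starSum s z i + (#s - 2 : ℤ) • x i + ∑ j ∈ s, x j - (#s - 1 : ℤ) • y := by
  have hsplit : starSum s (fun P => z P + ∑ j ∈ P, x j - y) i =
      starSum s z i + starSum s (fun P => ∑ j ∈ P, x j) i - starSum s (fun _ => y) i := by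
    simp only [starSum, sum_add_distrib, sum_sub_distrib]
  rw [hsplit, starSum_sum hi, starSum_const hi]
  abel

end PairSums

lemma two_mul_choose_two_cast (n : ℕ) : 2 * (n.choose 2 : ℤ) = n * (n - 1) := by
  have h : (2 * (n.choose 2 : ℤ) : ℚ) = n * (n - 1) := by
    push_cast [Nat.cast_choose_two]
    ring
  exact_mod_cast h

section KneserRelations

open Finset

variable {ι A : Type*} [DecidableEq ι] [AddCommGroup A]

/-- The relations imposed by the rows of the Laplacian of the Kneser graph on the pairs of
elements of `s`. On pairs the adjacency matrix is `J - N - I`, where `N` has entries `#(B ∩ P)`,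
so a Laplacian with diagonal entry `a + 1` is `a I + N - J`. -/
def KneserRel (s : Finset ι) (a : ℤ) (e : Finset ι → A) : Prop :=
  ∀ B ∈ s.powersetCard 2, a • e B + ∑ i ∈ B, starSum s e i = ∑ P ∈ s.powersetCard 2, e P

lemma KneserRel.map {B : Type*} [AddCommGroup B] {s : Finset ι} {a : ℤ} {e : Finset ι → A}
    (he : KneserRel s a e) (φ : A →+ B) : KneserRel s a fun P => φ (e P) := by
  intro P hP
  simpa [map_starSum] using congrArg φ (he P hP)

/-- A splitting of a function `e` on the pairs of `insert α U` as
`e P = z P + ∑ i ∈ P, x i - y`, normalized by `x α = 0` and `z {α, i} = 0`. -/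
structure IsPairSplitting (α : ι) (U : Finset ι) (e : Finset ι → A) (y : A) (x : ι → A)
    (z : Finset ι → A) : Prop where
  apex : ∀ i ∈ U, e {α, i} = x i - y
  pair : ∀ P ∈ U.powersetCard 2, e P = z P + ∑ i ∈ P, x i - y

/-- What the Kneser relations on `insert α U` become in the coordinates of a splitting
with `z g = 0` for some pair `g`. -/
structure ReducedRel (U : Finset ι) (a : ℤ) (x : ι → A) (z : Finset ι → A) : Prop where
  smul_eq_zero : ∀ P ∈ U.powersetCard 2, a • z P = 0
  star : ∀ i ∈ U, starSum U z i + (a + #U - 1) • x i = 0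
  total : ∑ P ∈ U.powersetCard 2, z P + (#U - 2 : ℤ) • ∑ i ∈ U, x i = 0

namespace IsPairSplitting

variable {α : ι} {U : Finset ι} {e : Finset ι → A} {y : A} {x : ι → A} {z : Finset ι → A}
  {a : ℤ} {i : ι} {g : Finset ι}

lemma starSum_apex (h : IsPairSplitting α U e y x z) (hα : α ∉ U) :
    starSum (insert α U) e α = ∑ i ∈ U, x i - (#U : ℤ) • y := by
  rw [starSum_insert_self hα, sum_congr rfl h.apex, sum_sub_distrib, sum_const, natCast_zsmul]

lemma starSum_eq (h : IsPairSplitting α U e y x z) (hα : α ∉ U) (hi : i ∈ U) :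
    starSum (insert α U) e i =
      starSum U z i + (#U - 1 : ℤ) • x i + ∑ j ∈ U, x j - (#U : ℤ) • y := by
  rw [starSum_insert_of_mem hα hi, h.apex i hi, starSum_congr h.pair hi,
    starSum_add_sum_sub hi]
  module

lemma sum_eq (h : IsPairSplitting α U e y x z) (hα : α ∉ U) (ha : 2 * a = #U * (#U - 3)) :
    ∑ P ∈ (insert α U).powersetCard 2, e P =
      ∑ P ∈ U.powersetCard 2, z P + (#U : ℤ) • ∑ i ∈ U, x i - (a + 2 * #U) • y := by
  have hchoose : ((#U).choose 2 : ℤ) = a + #U := by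
    linarith [two_mul_choose_two_cast #U]
  rw [sum_powersetCard_two_insert hα, sum_congr rfl h.apex, sum_congr rfl h.pair,
    sum_sub_distrib, sum_sub_distrib, sum_add_distrib, sum_powersetCard_two_sum, sum_const,
    sum_const, card_powersetCard, ← natCast_zsmul, ← natCast_zsmul, hchoose]
  module

lemma kneserRel_iff_eq_const (h : IsPairSplitting α U e y x z) (hα : α ∉ U)
    (ha : 2 * a = #U * (#U - 3)) {κ : A}
    (hκ : κ = ∑ P ∈ U.powersetCard 2, z P + (#U - 2 : ℤ) • ∑ i ∈ U, x i) :
    KneserRel (insert α U) a e ↔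
      (∀ i ∈ U, starSum U z i + (a + #U - 1) • x i = κ) ∧
      ∀ P ∈ U.powersetCard 2,
        a • z P + ∑ i ∈ P, (starSum U z i + (a + #U - 1) • x i) = κ := by
  rw [KneserRel, forall_mem_powersetCard_two_insert hα, h.sum_eq hα ha, hκ]
  refine and_congr (forall₂_congr fun i hi => ?_) (forall₂_congr fun P hP => ?_)
  · have hαi : α ≠ i := fun hαi => hα (hαi ▸ hi)
    rw [sum_pair hαi, h.starSum_apex hα, h.starSum_eq hα hi, h.apex i hi,
      ← sub_eq_zero, ← sub_eq_zero (a := starSum U z i + _)]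
    refine Eq.congr_left ?_
    module
  · obtain ⟨hPU, hPcard⟩ := mem_powersetCard.1 hP
    rw [sum_congr rfl fun i hi => h.starSum_eq hα (hPU hi), h.pair P hP, sum_sub_distrib,
      sum_add_distrib, sum_add_distrib, sum_add_distrib, sum_const, sum_const, hPcard,
      ← smul_sum, ← smul_sum, ← sub_eq_zero, ← sub_eq_zero (a := a • z P + _)]
    refine Eq.congr_left ?_
    module

lemma kneserRel_iff_reducedRel (h : IsPairSplitting α U e y x z) (hα : α ∉ U)
    (ha : 2 * a = #U * (#U - 3)) (hg : g ∈ U.powersetCard 2) (hzg : z g = 0) :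
    KneserRel (insert α U) a e ↔ ReducedRel U a x z := by
  rw [h.kneserRel_iff_eq_const hα ha rfl]
  constructor
  · intro ⟨hstar, hpair⟩
    have hpair' : ∀ P ∈ U.powersetCard 2, a • z P =
        -(∑ P ∈ U.powersetCard 2, z P + (#U - 2 : ℤ) • ∑ i ∈ U, x i) := by
      intro P hP
      obtain ⟨hPU, hPcard⟩ := mem_powersetCard.1 hP
      have hP' := hpair P hP
      rw [sum_congr rfl fun i hi => hstar i (hPU hi), sum_const, hPcard] at hP'
      linear_combination (norm := module) hP'
    -- `z g = 0` forces the common value of all the relations to vanish.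
    have htotal : ∑ P ∈ U.powersetCard 2, z P + (#U - 2 : ℤ) • ∑ i ∈ U, x i = 0 := by
      rw [← neg_eq_zero, ← hpair' g hg, hzg, smul_zero]
    rw [htotal] at hstar
    exact ⟨by simpa only [htotal, neg_zero] using hpair', hstar, htotal⟩
  · intro hred
    rw [hred.total]
    refine ⟨hred.star, fun P hP => ?_⟩
    rw [hred.smul_eq_zero P hP, zero_add]
    exact sum_eq_zero fun i hi => hred.star i ((mem_powersetCard.1 hP).1 hi)

end IsPairSplitting

/-- What `ReducedRel` on `insert β V` becomes once the values `z {β, i}` are eliminated and `x β`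
is replaced by the sum `σ` of all values of `x`. -/
structure TorsionRel (V : Finset ι) (a : ℤ) (x : ι → A) (z : Finset ι → A) (σ : A) : Prop where
  pair : ∀ P ∈ V.powersetCard 2, a • z P = 0
  vertex : ∀ i ∈ V, (a * (a + #V)) • x i = 0
  sum : (a + 2 - #V) • σ = 0
  total : ∑ P ∈ V.powersetCard 2, z P = (#V - 1 : ℤ) • σ - (a + #V) • ∑ i ∈ V, x i

section Reduction

variable {β : ι} {V : Finset ι} {a : ℤ} {x : ι → A} {z : Finset ι → A} {f g : Finset ι} {σ : A}

lemma smul_starSum_eq_zero {i : ι} (hi : i ∈ V) (hz : ∀ P ∈ V.powersetCard 2, a • z P = 0) :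
    a • starSum V z i = 0 := by
  rw [starSum_eq_sum_ite hi, smul_sum]
  refine sum_eq_zero fun P hP => ?_
  rw [smul_ite, hz P hP, smul_zero, ite_self]

lemma sum_starSum_add_smul (V : Finset ι) (r : ℤ) (x : ι → A) (z : Finset ι → A) :
    ∑ i ∈ V, (starSum V z i + r • x i) =
      (2 : ℤ) • ∑ P ∈ V.powersetCard 2, z P + r • ∑ i ∈ V, x i := by
  rw [sum_add_distrib, sum_starSum, ← smul_sum]

lemma reducedRel_insert_iff (hβ : β ∉ V) (hσ : σ = ∑ i ∈ insert β V, x i) :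
    ReducedRel (insert β V) a x z ↔
      (∀ i ∈ V, z {β, i} = -(starSum V z i + (a + #V) • x i)) ∧ TorsionRel V a x z σ := by
  have hcard : (#(insert β V) : ℤ) = #V + 1 := by simp [card_insert_of_notMem hβ]
  have hxβ : x β = σ - ∑ i ∈ V, x i := by rw [hσ, sum_insert hβ]; abel
  constructor
  · rintro ⟨hsmul, hstar, htotal⟩
    rw [forall_mem_powersetCard_two_insert hβ] at hsmul
    have helim : ∀ i ∈ V, z {β, i} = -(starSum V z i + (a + #V) • x i) := by
      intro i hi
      have hi' := hstar i (mem_insert_of_mem hi)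
      rw [starSum_insert_of_mem hβ hi, hcard] at hi'
      linear_combination (norm := module) hi'
    have hstarβ := hstar β (mem_insert_self β V)
    rw [starSum_insert_self hβ, sum_congr rfl helim, sum_neg_distrib, sum_starSum_add_smul, hcard,
      hxβ] at hstarβ
    rw [sum_powersetCard_two_insert hβ, sum_congr rfl helim, sum_neg_distrib,
      sum_starSum_add_smul, hcard, ← hσ] at htotal
    refine ⟨helim, hsmul.2, fun i hi => ?_, ?_, ?_⟩
    · have hi' := hsmul.1 i hi
      rw [helim i hi] at hi'
      linear_combination (norm := module) -hi' - smul_starSum_eq_zero hi hsmul.2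
    · linear_combination (norm := module) hstarβ - (2 : ℤ) • htotal
    · linear_combination (norm := module) -htotal
  · rintro ⟨helim, hpair, hvertex, hsum, htotal⟩
    refine ⟨(forall_mem_powersetCard_two_insert hβ).2 ⟨fun i hi => ?_, hpair⟩,
      forall_mem_insert .. |>.2 ⟨?_, fun i hi => ?_⟩, ?_⟩
    · rw [helim i hi]
      linear_combination (norm := module) -hvertex i hi - smul_starSum_eq_zero hi hpair
    · rw [starSum_insert_self hβ, sum_congr rfl helim, sum_neg_distrib, sum_starSum_add_smul,
        hcard, hxβ, htotal]
      linear_combination (norm := module) hsum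
    · rw [starSum_insert_of_mem hβ hi, helim i hi, hcard]
      module
    · rw [sum_powersetCard_two_insert hβ, sum_congr rfl helim, sum_neg_distrib,
        sum_starSum_add_smul, hcard, ← hσ, htotal]
      module

/-- The pairs in `V` other than `f` and `g`. The residue at `g` is normalized to zero and the one
at `f` is determined by the remaining coordinates. -/
def freePairs (V f g : Finset ι) : Finset (Finset ι) :=
  ((V.powersetCard 2).erase g).erase f

lemma freePairs_subset (V f g : Finset ι) : freePairs V f g ⊆ V.powersetCard 2 :=
  (erase_subset _ _).trans (erase_subset _ _)

lemma card_freePairs (hg : g ∈ V.powersetCard 2) (hf : f ∈ V.powersetCard 2) (hfg : f ≠ g) :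
    #(freePairs V f g) = (#V).choose 2 - 2 := by
  rw [freePairs, card_erase_of_mem (mem_erase.2 ⟨hfg, hf⟩), card_erase_of_mem hg,
    card_powersetCard, Nat.sub_sub]

lemma sum_powersetCard_two_eq_of_apply_eq_zero (hg : g ∈ V.powersetCard 2)
    (hf : f ∈ V.powersetCard 2) (hfg : f ≠ g) (hzg : z g = 0) :
    ∑ P ∈ V.powersetCard 2, z P = z f + ∑ P ∈ freePairs V f g, z P := by
  rw [← add_sum_erase _ _ hg, hzg, zero_add, freePairs,
    add_sum_erase _ _ (mem_erase.2 ⟨hfg, hf⟩)]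

lemma forall_mem_powersetCard_two_of_freePairs {p : Finset ι → Prop} (hpg : p g) (hpf : p f)
    (hp : ∀ P ∈ freePairs V f g, p P) : ∀ P ∈ V.powersetCard 2, p P := by
  intro P hP
  by_cases hPg : P = g
  · exact hPg ▸ hpg
  by_cases hPf : P = f
  · exact hPf ▸ hpf
  exact hp P (mem_erase.2 ⟨hPf, mem_erase.2 ⟨hPg, hP⟩⟩)

lemma TorsionRel.eq_of_eq_on_freePairs {x' : ι → A} {z' : Finset ι → A}
    (h : TorsionRel V a x z σ) (h' : TorsionRel V a x' z' σ) (hg : g ∈ V.powersetCard 2)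
    (hf : f ∈ V.powersetCard 2) (hfg : f ≠ g) (hzg : z g = 0) (hzg' : z' g = 0)
    (hx : ∀ i ∈ V, x i = x' i) (hz : ∀ P ∈ freePairs V f g, z P = z' P) :
    ∀ P ∈ V.powersetCard 2, z P = z' P := by
  refine forall_mem_powersetCard_two_of_freePairs (hzg.trans hzg'.symm) ?_ hz
  have htotal := h.total
  rw [sum_congr rfl hx, ← h'.total, sum_powersetCard_two_eq_of_apply_eq_zero hg hf hfg hzg,
    sum_powersetCard_two_eq_of_apply_eq_zero hg hf hfg hzg', sum_congr rfl hz] at htotal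
  exact add_right_cancel htotal

lemma exists_torsionRel (ha : 2 * a = (#V + 1) * (#V - 2)) (hg : g ∈ V.powersetCard 2)
    (hf : f ∈ V.powersetCard 2) (hfg : f ≠ g)
    (hz : ∀ P ∈ freePairs V f g, a • z P = 0)
    (hx : ∀ i ∈ V, (a * (a + #V)) • x i = 0) (hσ : (a + 2 - #V) • σ = 0) :
    ∃ z', TorsionRel V a x z' σ ∧ z' g = 0 ∧
      ∀ P ∈ freePairs V f g, z' P = z P := by
  set zf : A := (#V - 1 : ℤ) • σ - (a + #V) • ∑ i ∈ V, x i - ∑ P ∈ freePairs V f g, z P with hzf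
  let z' := Function.update (Function.update z g 0) f zf
  have hz'g : z' g = 0 := by simp [z', hfg.symm]
  have hz'f : z' f = zf := by simp [z']
  have hz' : ∀ P ∈ freePairs V f g, z' P = z P := by
    intro P hP
    rw [freePairs, mem_erase] at hP
    obtain ⟨hPf, hP⟩ := hP
    simp [z', hPf, ne_of_mem_erase hP]
  have hzf_smul : a • zf = 0 := by
    have hxsum : (a * (a + #V)) • ∑ i ∈ V, x i = 0 := by rw [smul_sum, sum_eq_zero hx]
    have hzsum : a • ∑ P ∈ freePairs V f g, z P = 0 := by rw [smul_sum, sum_eq_zero hz]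
    have hσ' : (a * (#V - 1)) • σ = 0 := by
      have hcoeff : a * (#V - 1) = (#V + 1) * (a + 2 - #V) := by linear_combination -ha
      rw [hcoeff, mul_smul, hσ, smul_zero]
    linear_combination (norm := module) a • hzf + hσ' - hxsum - hzsum
  refine ⟨z', ⟨?_, hx, hσ, ?_⟩, hz'g, hz'⟩
  · refine forall_mem_powersetCard_two_of_freePairs (g := g) (f := f) ?_ ?_ fun P hP => ?_
    · rw [hz'g, smul_zero]
    · rw [hz'f, hzf_smul]
    · rw [hz' P hP, hz P hP]
  · rw [sum_powersetCard_two_eq_of_apply_eq_zero hg hf hfg hz'g, hz'f, sum_congr rfl hz', hzf]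
    abel

end Reduction

end KneserRelations

section Coordinates

open Finset

variable {ι A : Type*} [DecidableEq ι] [AddCommGroup A]

/-- The constant `y` of the splitting of `e` at `α` with `z g = 0`. -/
def pairConst (α : ι) (g : Finset ι) (e : Finset ι → A) : A :=
  e g - ∑ i ∈ g, e {α, i}

/-- The vertex values `x i` of the splitting of `e` at `α` with `z g = 0`. -/
def pairVertex (α : ι) (g : Finset ι) (e : Finset ι → A) (i : ι) : A :=
  e {α, i} + pairConst α g e

/-- The residues `z P` of the splitting of `e` at `α` with `z g = 0`. -/
def pairResidue (α : ι) (g : Finset ι) (e : Finset ι → A) (P : Finset ι) : A :=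
  e P - ∑ i ∈ P, pairVertex α g e i + pairConst α g e

section Splitting

variable {α i : ι} {U P g : Finset ι} {e z : Finset ι → A} {y : A} {x : ι → A}

lemma isPairSplitting_pairConst (α : ι) (U g : Finset ι) (e : Finset ι → A) :
    IsPairSplitting α U e (pairConst α g e) (pairVertex α g e) (pairResidue α g e) where
  apex i _ := by rw [pairVertex, add_sub_cancel_right]
  pair P _ := by rw [pairResidue]; abel

lemma pairResidue_self (hg : #g = 2) (α : ι) (e : Finset ι → A) : pairResidue α g e g = 0 := by
  simp only [pairResidue, pairVertex, sum_add_distrib, sum_const, hg]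
  rw [pairConst]
  module

namespace IsPairSplitting

lemma pairConst_eq (h : IsPairSplitting α U e y x z) (hg : g ∈ U.powersetCard 2)
    (hzg : z g = 0) : pairConst α g e = y := by
  obtain ⟨hgU, hgcard⟩ := mem_powersetCard.1 hg
  rw [pairConst, h.pair g hg, hzg, sum_congr rfl fun i hi => h.apex i (hgU hi), sum_sub_distrib,
    sum_const, hgcard]
  module

lemma pairVertex_eq (h : IsPairSplitting α U e y x z) (hg : g ∈ U.powersetCard 2)
    (hzg : z g = 0) (hi : i ∈ U) : pairVertex α g e i = x i := by
  rw [pairVertex, h.apex i hi, h.pairConst_eq hg hzg, sub_add_cancel]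

lemma pairResidue_eq (h : IsPairSplitting α U e y x z) (hg : g ∈ U.powersetCard 2)
    (hzg : z g = 0) (hP : P ∈ U.powersetCard 2) : pairResidue α g e P = z P := by
  have hPU := (mem_powersetCard.1 hP).1
  rw [pairResidue, sum_congr rfl fun i hi => h.pairVertex_eq hg hzg (hPU hi), h.pair P hP,
    h.pairConst_eq hg hzg]
  abel

end IsPairSplitting

end Splitting

/-- The coordinates of a solution of the Kneser relations; also, for `A` a product of cyclic
groups, a tuple of generators of `A`. -/
@[ext]
structure KneserCoords (κ ν A : Type*) where
  const : A
  residue : κ → A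
  vertex : ν → A
  sum : A

namespace KneserCoords

variable {κ ν : Type*} {B : Type*} [AddCommGroup B]

/-- The image of a tuple of coordinates under a homomorphism. -/
@[simps]
def map (φ : A →+ B) (t : KneserCoords κ ν A) : KneserCoords κ ν B where
  const := φ t.const
  residue P := φ (t.residue P)
  vertex i := φ (t.vertex i)
  sum := φ t.sum

/-- The relations that make a tuple of coordinates the image of the standard generators of
`ℤ × (κ → ZMod a) × (ν → ZMod b) × ZMod c`. -/
structure IsTorsion (a b c : ℤ) (t : KneserCoords κ ν A) : Prop where
  residue : ∀ P, a • t.residue P = 0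
  vertex : ∀ i, b • t.vertex i = 0
  sum : c • t.sum = 0

end KneserCoords

/-- The coordinates of `e : Finset ι → A` with respect to the roots `α`, `β` and the pairs
`f`, `g`. -/
def kneserCoords (α β : ι) (V f g : Finset ι) (e : Finset ι → A) :
    KneserCoords (freePairs V f g) V A where
  const := pairConst α g e
  residue P := pairResidue α g e P
  vertex i := pairVertex α g e i
  sum := ∑ i ∈ insert β V, pairVertex α g e i

variable {α β : ι} {V f g : Finset ι} {a : ℤ} {e e' : Finset ι → A}

lemma kneserCoords_map {B : Type*} [AddCommGroup B] (φ : A →+ B) :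
    kneserCoords α β V f g (fun P => φ (e P)) = (kneserCoords α β V f g e).map φ := by
  ext <;> simp [kneserCoords, pairConst, pairVertex, pairResidue]

lemma kneserCoords_congr (hg : g ∈ V.powersetCard 2) (hα : α ∉ insert β V)
    (h : ∀ P ∈ (insert α (insert β V)).powersetCard 2, e P = e' P) :
    kneserCoords α β V f g e = kneserCoords α β V f g e' := by
  obtain ⟨happ, hpair⟩ := (forall_mem_powersetCard_two_insert hα).1 h
  have hsplit := isPairSplitting_pairConst α (insert β V) g e
  have hsplit' : IsPairSplitting α (insert β V) e' (pairConst α g e) (pairVertex α g e)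
      (pairResidue α g e) :=
    ⟨fun i hi => (happ i hi).symm.trans (hsplit.apex i hi),
      fun P hP => (hpair P hP).symm.trans (hsplit.pair P hP)⟩
  have hmono := powersetCard_mono (n := 2) (subset_insert β V)
  have hzg := pairResidue_self (mem_powersetCard.1 hg).2 α e
  have hvertex : ∀ i ∈ insert β V, pairVertex α g e i = pairVertex α g e' i := fun i hi =>
    (hsplit'.pairVertex_eq (hmono hg) hzg hi).symm
  exact KneserCoords.ext (hsplit'.pairConst_eq (hmono hg) hzg).symm
    (funext fun P =>
      (hsplit'.pairResidue_eq (hmono hg) hzg (hmono (freePairs_subset V f g P.2))).symm)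
    (funext fun i => hvertex i (mem_insert_of_mem i.2)) (sum_congr rfl hvertex)

lemma kneserRel_iff_torsionRel (hα : α ∉ insert β V) (hβ : β ∉ V)
    (ha : 2 * a = (#V + 1) * (#V - 2)) {y σ : A} {x : ι → A} {z : Finset ι → A}
    (h : IsPairSplitting α (insert β V) e y x z) (hg : g ∈ V.powersetCard 2) (hzg : z g = 0)
    (hσ : σ = ∑ i ∈ insert β V, x i) :
    KneserRel (insert α (insert β V)) a e ↔
      (∀ i ∈ V, z {β, i} = -(starSum V z i + (a + #V) • x i)) ∧ TorsionRel V a x z σ := by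
  have ha' : 2 * a = #(insert β V) * (#(insert β V) - 3) := by
    rw [card_insert_of_notMem hβ, ha]
    push_cast
    ring
  have hg' : g ∈ (insert β V).powersetCard 2 := powersetCard_mono (subset_insert β V) hg
  rw [h.kneserRel_iff_reducedRel hα ha' hg' hzg, reducedRel_insert_iff hβ hσ]

lemma KneserRel.splitting (he : KneserRel (insert α (insert β V)) a e) (hα : α ∉ insert β V)
    (hβ : β ∉ V) (ha : 2 * a = (#V + 1) * (#V - 2)) (hg : g ∈ V.powersetCard 2) :
    (∀ i ∈ V, pairResidue α g e {β, i} =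
      -(starSum V (pairResidue α g e) i + (a + #V) • pairVertex α g e i)) ∧
    TorsionRel V a (pairVertex α g e) (pairResidue α g e)
      (∑ i ∈ insert β V, pairVertex α g e i) :=
  (kneserRel_iff_torsionRel hα hβ ha (isPairSplitting_pairConst α _ g e) hg
    (pairResidue_self (mem_powersetCard.1 hg).2 α e) rfl).1 he

lemma KneserRel.isTorsion_kneserCoords (he : KneserRel (insert α (insert β V)) a e)
    (hα : α ∉ insert β V) (hβ : β ∉ V) (ha : 2 * a = (#V + 1) * (#V - 2))
    (hg : g ∈ V.powersetCard 2) :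
    (kneserCoords α β V f g e).IsTorsion a (a * (a + #V)) (a + 2 - #V) where
  residue P := (he.splitting hα hβ ha hg).2.pair P (freePairs_subset V f g P.2)
  vertex i := (he.splitting hα hβ ha hg).2.vertex i i.2
  sum := (he.splitting hα hβ ha hg).2.sum

lemma KneserRel.eq_of_kneserCoords_eq (he : KneserRel (insert α (insert β V)) a e)
    (he' : KneserRel (insert α (insert β V)) a e') (hα : α ∉ insert β V) (hβ : β ∉ V)
    (ha : 2 * a = (#V + 1) * (#V - 2)) (hg : g ∈ V.powersetCard 2) (hf : f ∈ V.powersetCard 2)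
    (hfg : f ≠ g) (hcoords : kneserCoords α β V f g e = kneserCoords α β V f g e') :
    ∀ P ∈ (insert α (insert β V)).powersetCard 2, e P = e' P := by
  obtain ⟨hy, hz, hx, hσ⟩ := KneserCoords.ext_iff.1 hcoords
  simp only [kneserCoords, funext_iff, Subtype.forall] at hy hz hx hσ
  obtain ⟨helim, hrel⟩ := he.splitting hα hβ ha hg
  obtain ⟨helim', hrel'⟩ := he'.splitting hα hβ ha hg
  have hxU : ∀ i ∈ insert β V, pairVertex α g e i = pairVertex α g e' i := by
    refine forall_mem_insert .. |>.2 ⟨?_, hx⟩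
    rw [sum_insert hβ, sum_insert hβ, sum_congr rfl hx] at hσ
    exact add_right_cancel hσ
  rw [hσ] at hrel
  have hzV := hrel.eq_of_eq_on_freePairs hrel' hg hf hfg
    (pairResidue_self (mem_powersetCard.1 hg).2 α e)
    (pairResidue_self (mem_powersetCard.1 hg).2 α e') hx hz
  have hzU : ∀ P ∈ (insert β V).powersetCard 2, pairResidue α g e P = pairResidue α g e' P := by
    refine (forall_mem_powersetCard_two_insert hβ).2 ⟨fun i hi => ?_, hzV⟩
    rw [helim i hi, helim' i hi, starSum_congr hzV hi, hx i hi]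
  have hsplit := isPairSplitting_pairConst α (insert β V) g e
  have hsplit' := isPairSplitting_pairConst α (insert β V) g e'
  refine (forall_mem_powersetCard_two_insert hα).2 ⟨fun i hi => ?_, fun P hP => ?_⟩
  · rw [hsplit.apex i hi, hsplit'.apex i hi, hxU i hi, hy]
  · rw [hsplit.pair P hP, hsplit'.pair P hP, hzU P hP, hy,
      sum_congr rfl fun i hi => hxU i ((mem_powersetCard.1 hP).1 hi)]

lemma exists_isPairSplitting {U : Finset ι} (hα : α ∉ U) (y : A) (x : ι → A)
    (z : Finset ι → A) : ∃ e, IsPairSplitting α U e y x z := by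
  obtain ⟨e, happ, hpair⟩ :=
    exists_extend_pairs hα (fun P => z P + ∑ i ∈ P, x i - y) fun i => x i - y
  exact ⟨e, happ, hpair⟩

omit [DecidableEq ι] in
lemma TorsionRel.congr {x x' : ι → A} {z z' : Finset ι → A} {σ : A} (h : TorsionRel V a x z σ)
    (hx : ∀ i ∈ V, x' i = x i) (hz : ∀ P ∈ V.powersetCard 2, z' P = z P) :
    TorsionRel V a x' z' σ where
  pair P hP := by rw [hz P hP, h.pair P hP]
  vertex i hi := by rw [hx i hi, h.vertex i hi]
  sum := h.sum
  total := by rw [sum_congr rfl hz, sum_congr rfl hx, h.total]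

lemma TorsionRel.exists_kneserRel {x : ι → A} {z : Finset ι → A} {σ : A}
    (h : TorsionRel V a x z σ) (hα : α ∉ insert β V) (hβ : β ∉ V)
    (ha : 2 * a = (#V + 1) * (#V - 2)) (hg : g ∈ V.powersetCard 2) (hzg : z g = 0) (y : A) :
    ∃ e x' z', KneserRel (insert α (insert β V)) a e ∧
      IsPairSplitting α (insert β V) e y x' z' ∧ (∀ i ∈ V, x' i = x i) ∧
      ∑ i ∈ insert β V, x' i = σ ∧ ∀ P ∈ V.powersetCard 2, z' P = z P := by
  obtain ⟨z', hz'β, hz'⟩ := exists_extend_pairs hβ z fun i => -(starSum V z i + (a + #V) • x i)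
  let x' := Function.update x β (σ - ∑ i ∈ V, x i)
  have hx' : ∀ i ∈ V, x' i = x i := fun i hi =>
    Function.update_of_ne (ne_of_mem_of_not_mem hi hβ) _ _
  have hσ : ∑ i ∈ insert β V, x' i = σ := by
    rw [sum_insert hβ, sum_congr rfl hx']
    simp [x']
  obtain ⟨e, he⟩ := exists_isPairSplitting hα y x' z'
  refine ⟨e, x', z', ?_, he, hx', hσ, hz'⟩
  refine (kneserRel_iff_torsionRel hα hβ ha he hg (by rw [hz' g hg, hzg]) hσ.symm).2
    ⟨fun i hi => ?_, h.congr hx' hz'⟩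
  rw [hz'β i hi, starSum_congr hz' hi, hx' i hi]

lemma KneserCoords.IsTorsion.exists_kneserRel {t : KneserCoords (freePairs V f g) V A}
    (ht : t.IsTorsion a (a * (a + #V)) (a + 2 - #V)) (hα : α ∉ insert β V) (hβ : β ∉ V)
    (ha : 2 * a = (#V + 1) * (#V - 2)) (hg : g ∈ V.powersetCard 2) (hf : f ∈ V.powersetCard 2)
    (hfg : f ≠ g) :
    ∃ e, KneserRel (insert α (insert β V)) a e ∧ kneserCoords α β V f g e = t := by
  let x₀ : ι → A := fun i => if h : i ∈ V then t.vertex ⟨i, h⟩ else 0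
  let z₀ : Finset ι → A := fun P => if h : P ∈ freePairs V f g then t.residue ⟨P, h⟩ else 0
  have hx₀ : ∀ i (hi : i ∈ V), x₀ i = t.vertex ⟨i, hi⟩ := fun i hi => dif_pos hi
  have hz₀ : ∀ P (hP : P ∈ freePairs V f g), z₀ P = t.residue ⟨P, hP⟩ := fun P hP => dif_pos hP
  obtain ⟨z, hrel, hzg, hz⟩ := exists_torsionRel ha hg hf hfg (z := z₀) (x := x₀)
    (fun P hP => by rw [hz₀ P hP, ht.residue]) (fun i hi => by rw [hx₀ i hi, ht.vertex]) ht.sum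
  obtain ⟨e, x', z', he, hsplit, hx', hσ, hz'⟩ :=
    hrel.exists_kneserRel hα hβ ha hg hzg t.const
  have hg' : g ∈ (insert β V).powersetCard 2 := powersetCard_mono (subset_insert β V) hg
  have hz'g : z' g = 0 := by rw [hz' g hg, hzg]
  have hvertex : ∀ i ∈ insert β V, pairVertex α g e i = x' i := fun i hi =>
    hsplit.pairVertex_eq hg' hz'g hi
  refine ⟨e, he, KneserCoords.ext (hsplit.pairConst_eq hg' hz'g) (funext fun P => ?_)
    (funext fun i => ?_) ((sum_congr rfl hvertex).trans hσ)⟩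
  · have hP := freePairs_subset V f g P.2
    exact (hsplit.pairResidue_eq hg' hz'g (powersetCard_mono (subset_insert β V) hP)).trans <|
      (hz' P hP).trans <| (hz P P.2).trans <| hz₀ P P.2
  · exact (hvertex i (mem_insert_of_mem i.2)).trans <| (hx' i i.2).trans <| hx₀ i i.2

end Coordinates

section CyclicProducts

variable {A : Type*} [AddCommGroup A] {κ ν : Type*} [Finite κ] [DecidableEq κ] [Finite ν]
  [DecidableEq ν] {a b c m : ℕ}

lemma exists_zmod_hom {g : A} (h : (m : ℤ) • g = 0) : ∃ φ : ZMod m →+ A, φ 1 = g := by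
  let F : {φ : ℤ →+ A // φ m = 0} := ⟨zmultiplesHom A g, by simpa using h⟩
  refine ⟨ZMod.lift m F, ?_⟩
  simpa [F] using ZMod.lift_coe m F 1

lemma zmod_hom_ext {φ ψ : ZMod m →+ A} (h : φ 1 = ψ 1) : φ = ψ := by
  refine AddMonoidHom.ext fun t => ?_
  obtain ⟨s, rfl⟩ := ZMod.intCast_surjective t
  rw [← zsmul_one, map_zsmul, map_zsmul, h]

lemma exists_pi_zmod_hom {g : κ → A} (h : ∀ i, (m : ℤ) • g i = 0) :
    ∃ φ : (κ → ZMod m) →+ A, ∀ i, φ (Pi.single i 1) = g i := by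
  have := Fintype.ofFinite κ
  choose F hF using fun i => exists_zmod_hom (h i)
  refine ⟨∑ i, (F i).comp (Pi.evalAddMonoidHom (fun _ => ZMod m) i), fun i => ?_⟩
  rw [AddMonoidHom.finsetSum_apply, Finset.sum_eq_single i]
  · simp [hF]
  · intro j _ hj
    simp [hj]
  · simp

lemma pi_zmod_hom_ext {φ ψ : (κ → ZMod m) →+ A}
    (h : ∀ i, φ (Pi.single i 1) = ψ (Pi.single i 1)) : φ = ψ :=
  AddMonoidHom.functions_ext' _ φ ψ fun i => zmod_hom_ext (h i)

lemma prod_hom_ext {M N : Type*} [AddCommGroup M] [AddCommGroup N] {φ ψ : M × N →+ A}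
    (hinl : φ.comp (AddMonoidHom.inl M N) = ψ.comp (AddMonoidHom.inl M N))
    (hinr : φ.comp (AddMonoidHom.inr M N) = ψ.comp (AddMonoidHom.inr M N)) : φ = ψ := by
  rw [← AddMonoidHom.coprod_unique φ, hinl, hinr, AddMonoidHom.coprod_unique]

namespace KneserCoords

/-- The standard generators of `ℤ × (κ → ZMod a) × (ν → ZMod b) × ZMod c`, arranged as a tuple
of coordinates. -/
def standard (κ ν : Type*) [DecidableEq κ] [DecidableEq ν] (a b c : ℕ) :
    KneserCoords κ ν (ℤ × (κ → ZMod a) × (ν → ZMod b) × ZMod c) where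
  const := (1, 0, 0, 0)
  residue P := (0, Pi.single P 1, 0, 0)
  vertex i := (0, 0, Pi.single i 1, 0)
  sum := (0, 0, 0, 1)

omit [Finite κ] [Finite ν] in
lemma isTorsion_standard : (standard κ ν a b c).IsTorsion a b c where
  residue P := by simp [standard, ← Pi.single_smul]
  vertex i := by simp [standard, ← Pi.single_smul]
  sum := by simp [standard]

lemma IsTorsion.exists_hom {t : KneserCoords κ ν A} (ht : t.IsTorsion a b c) :
    ∃ φ : ℤ × (κ → ZMod a) × (ν → ZMod b) × ZMod c →+ A, (standard κ ν a b c).map φ = t := by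
  obtain ⟨φz, hz⟩ := exists_pi_zmod_hom ht.residue
  obtain ⟨φx, hx⟩ := exists_pi_zmod_hom ht.vertex
  obtain ⟨φσ, hσ⟩ := exists_zmod_hom ht.sum
  refine ⟨(zmultiplesHom A t.const).coprod (φz.coprod (φx.coprod φσ)), ?_⟩
  ext <;> simp [standard, hz, hx, hσ]

lemma hom_ext_standard {φ ψ : ℤ × (κ → ZMod a) × (ν → ZMod b) × ZMod c →+ A}
    (h : (standard κ ν a b c).map φ = (standard κ ν a b c).map ψ) : φ = ψ := by
  obtain ⟨hconst, hres, hvertex, hsum⟩ := KneserCoords.ext_iff.1 h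
  exact prod_hom_ext (AddMonoidHom.ext_int hconst) <|
    prod_hom_ext (pi_zmod_hom_ext (congrFun hres)) <|
    prod_hom_ext (pi_zmod_hom_ext (congrFun hvertex)) (zmod_hom_ext hsum)

end KneserCoords

end CyclicProducts

section SmithGroups

variable {ρ γ A : Type*} [Fintype γ] [DecidableEq γ] [AddCommGroup A]

/-- The generator of the Smith group of `M` given by the column `c`. -/
def smithGen (M : Matrix ρ γ ℤ) (c : γ) : SmithGroup M :=
  Submodule.Quotient.mk (Pi.single c 1)

lemma sum_smul_smithGen (M : Matrix ρ γ ℤ) (v : γ → ℤ) :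
    ∑ c, v c • smithGen M c = Submodule.Quotient.mk v := by
  conv_rhs => rw [pi_eq_sum_univ' v]
  rw [← Submodule.mkQ_apply, map_sum]
  refine Finset.sum_congr rfl fun c _ => ?_
  rw [map_zsmul, Submodule.mkQ_apply, smithGen]

lemma sum_row_smul_smithGen (M : Matrix ρ γ ℤ) (r : ρ) : ∑ c, M r c • smithGen M c = 0 := by
  rw [sum_smul_smithGen, Submodule.Quotient.mk_eq_zero]
  exact Submodule.subset_span ⟨r, rfl⟩

lemma exists_smithGroup_hom {M : Matrix ρ γ ℤ} {f : γ → A}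
    (hf : ∀ r, ∑ c, M r c • f c = 0) :
    ∃ φ : SmithGroup M →+ A, ∀ c, φ (smithGen M c) = f c := by
  let F := Fintype.linearCombination ℤ f
  have hF : Submodule.span ℤ (Set.range fun r => M r) ≤ LinearMap.ker F :=
    Submodule.span_le.2 (Set.range_subset_iff.2 hf)
  refine ⟨((Submodule.span ℤ _).liftQ F hF).toAddMonoidHom, fun c => ?_⟩
  exact (Fintype.linearCombination_apply_single ℤ f c 1).trans (one_smul ℤ (f c))

omit [Fintype γ] in
lemma smithGroup_hom_ext [Finite γ] {M : Matrix ρ γ ℤ} {φ ψ : SmithGroup M →+ A}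
    (h : ∀ c, φ (smithGen M c) = ψ (smithGen M c)) : φ = ψ := by
  have := Fintype.ofFinite γ
  refine AddMonoidHom.ext fun t => ?_
  obtain ⟨v, rfl⟩ := Submodule.Quotient.mk_surjective _ t
  simp only [← sum_smul_smithGen, map_sum, map_zsmul, h]

end SmithGroups

section KneserLaplacian

open Finset

variable {A : Type*} [AddCommGroup A] {n : ℕ} {a : ℤ}

lemma ksubsets_eq_powersetCard (n k : ℕ) : ksubsets n k = (Icc 1 n).powersetCard k := by
  ext B
  simp [ksubsets, mem_powersetCard]

lemma kneserLap_apply (ha : ((n - 2).choose 2 : ℤ) = a + 1) (R P : ↥(ksubsets n 2)) :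
    kneserLap n R P = (if R = P then a else 0) + #(R.1 ∩ P.1) - 1 := by
  have hcard : ∀ Q : ↥(ksubsets n 2), #Q.1 = 2 := fun Q => (mem_filter.1 Q.2).2
  rw [kneserLap, Matrix.of_apply, ha]
  rcases eq_or_ne R P with rfl | hRP
  · simp only [if_true, inter_self, hcard]
    ring
  rw [if_neg hRP, if_neg hRP]
  split_ifs with hempty
  · simp [hempty]
  have hpos : 0 < #(R.1 ∩ P.1) := card_pos.2 (nonempty_iff_ne_empty.2 hempty)
  have hlt : #(R.1 ∩ P.1) < 2 := by
    by_contra! hge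
    have hR := eq_of_subset_of_card_le inter_subset_left ((hcard R).trans_le hge)
    have hP := eq_of_subset_of_card_le inter_subset_right ((hcard P).trans_le hge)
    exact hRP (Subtype.ext (hR.symm.trans hP))
  omega

lemma sum_kneserLap_smul (ha : ((n - 2).choose 2 : ℤ) = a + 1) (e : Finset ℕ → A)
    (R : ↥(ksubsets n 2)) :
    ∑ P, kneserLap n R P • e P =
      a • e R + ∑ i ∈ R.1, starSum (Icc 1 n) e i - ∑ P ∈ (Icc 1 n).powersetCard 2, e P := by
  have hR : R.1 ⊆ Icc 1 n := mem_powerset.1 (mem_filter.1 R.2).1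
  rw [← sum_card_inter_smul hR, ← ksubsets_eq_powersetCard, ← sum_coe_sort (ksubsets n 2),
    ← sum_coe_sort (ksubsets n 2)]
  simp only [kneserLap_apply ha, sub_smul, add_smul, one_smul, ite_smul, zero_smul,
    sum_sub_distrib, sum_add_distrib, sum_ite_eq, mem_univ, if_true]

lemma kneserRel_Icc_iff (ha : ((n - 2).choose 2 : ℤ) = a + 1) (e : Finset ℕ → A) :
    KneserRel (Icc 1 n) a e ↔ ∀ R, ∑ P, kneserLap n R P • e P = 0 := by
  simp only [sum_kneserLap_smul ha, sub_eq_zero, Subtype.forall, KneserRel,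
    ← ksubsets_eq_powersetCard]

/-- The generators of the Smith group of the Kneser Laplacian, as a function on all finite sets
of natural numbers; its value is `0` off the pairs. -/
noncomputable def kneserGen (n : ℕ) (B : Finset ℕ) : SmithGroup (kneserLap n) :=
  if h : B ∈ ksubsets n 2 then smithGen (kneserLap n) ⟨B, h⟩ else 0

lemma kneserGen_coe (P : ↥(ksubsets n 2)) : kneserGen n P = smithGen (kneserLap n) P :=
  dif_pos P.2

lemma kneserRel_kneserGen (ha : ((n - 2).choose 2 : ℤ) = a + 1) :
    KneserRel (Icc 1 n) a (kneserGen n) := by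
  simp only [kneserRel_Icc_iff ha, kneserGen_coe, sum_row_smul_smithGen, implies_true]

lemma KneserRel.exists_hom {e : Finset ℕ → A} (he : KneserRel (Icc 1 n) a e)
    (ha : ((n - 2).choose 2 : ℤ) = a + 1) :
    ∃ φ : SmithGroup (kneserLap n) →+ A, ∀ P ∈ (Icc 1 n).powersetCard 2,
      φ (kneserGen n P) = e P := by
  obtain ⟨φ, hφ⟩ := exists_smithGroup_hom ((kneserRel_Icc_iff ha e).1 he)
  rw [← ksubsets_eq_powersetCard]
  exact ⟨φ, fun P hP => by rw [← hφ ⟨P, hP⟩, ← kneserGen_coe]⟩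

lemma hom_ext_kneserGen {φ ψ : SmithGroup (kneserLap n) →+ A}
    (h : ∀ P ∈ (Icc 1 n).powersetCard 2, φ (kneserGen n P) = ψ (kneserGen n P)) : φ = ψ := by
  rw [← ksubsets_eq_powersetCard] at h
  exact smithGroup_hom_ext fun P => by simpa only [kneserGen_coe] using h P P.2

end KneserLaplacian

section Isomorphism

open Finset

lemma insert_one_insert_two_Icc_three {n : ℕ} (hn : 2 ≤ n) :
    insert 1 (insert 2 (Icc 3 n)) = Icc 1 n := by
  ext i
  simp only [mem_insert, mem_Icc]
  omega

lemma choose_add_three_two_sub_two (k : ℕ) :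
    (k + 3).choose 2 - 2 = (k + 5).choose 2 - 2 * (k + 5) + 1 := by
  simp only [Nat.choose_succ_succ' _ 1, Nat.choose_one_right]
  omega

lemma nonempty_smithGroup_kneserLap_addEquiv {n α β : ℕ} {V f g : Finset ℕ} {a b c : ℕ}
    (hn : insert α (insert β V) = Icc 1 n) (hα : α ∉ insert β V) (hβ : β ∉ V)
    (hg : g ∈ V.powersetCard 2) (hf : f ∈ V.powersetCard 2) (hfg : f ≠ g)
    (ha : 2 * (a : ℤ) = (#V + 1) * (#V - 2)) (hb : (b : ℤ) = a * (a + #V))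
    (hc : (c : ℤ) = a + 2 - #V) :
    Nonempty (SmithGroup (kneserLap n) ≃+
      ℤ × (freePairs V f g → ZMod a) × (V → ZMod b) × ZMod c) := by
  have hdiag : ((n - 2).choose 2 : ℤ) = a + 1 := by
    have hcard : n - 2 = #V := by
      simpa [card_insert_of_notMem, hα, hβ] using (congrArg (#· - 2) hn).symm
    rw [hcard]
    linarith [two_mul_choose_two_cast #V]
  have hgen : KneserRel (insert α (insert β V)) a (kneserGen n) :=
    hn ▸ kneserRel_kneserGen hdiag
  have htorsion := hgen.isTorsion_kneserCoords (f := f) hα hβ ha hg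
  rw [← hb, ← hc] at htorsion
  have hstandard := KneserCoords.isTorsion_standard (κ := freePairs V f g) (ν := V) (a := a)
    (b := b) (c := c)
  rw [hb, hc] at hstandard
  obtain ⟨ψ, hψ⟩ := htorsion.exists_hom
  obtain ⟨e, he, hcoords⟩ := hstandard.exists_kneserRel hα hβ ha hg hf hfg
  obtain ⟨φ, hφ⟩ := (hn ▸ he : KneserRel (Icc 1 n) a e).exists_hom hdiag
  have hφ' : (kneserCoords α β V f g (kneserGen n)).map φ = KneserCoords.standard _ _ a b c := by
    rw [← kneserCoords_map, kneserCoords_congr hg hα (hn ▸ hφ), hcoords]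
  refine ⟨φ.toAddEquiv ψ (hom_ext_kneserGen ?_) (KneserCoords.hom_ext_standard ?_)⟩
  · have hcomp : kneserCoords α β V f g (fun P => ψ (φ (kneserGen n P))) =
        kneserCoords α β V f g (kneserGen n) := by
      rw [kneserCoords_map ψ, kneserCoords_map φ, hφ', hψ]
    have huniq := ((hgen.map φ).map ψ).eq_of_kneserCoords_eq hgen hα hβ ha hg hf hfg hcomp
    exact hn ▸ huniq
  · change ((KneserCoords.standard _ _ a b c).map ψ).map φ = KneserCoords.standard _ _ a b c
    rw [hψ, hφ']

end Isomorphism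

/-- With `2a = (n−1)(n−4)`, `4b = (n−1)(n−3)(n−4)n` and `2c = (n−3)(n−4)`:
`S(L(K(n,2))) ≅ ℤ ⊕ (ℤ/aℤ)^{C(n,2)−2n+1} ⊕ (ℤ/bℤ)^{n−2} ⊕ ℤ/cℤ`. -/
theorem statement17 (n : ℕ) (hn : 5 ≤ n) (a b c : ℕ)
    (ha : 2 * a = (n - 1) * (n - 4))
    (hb : 4 * b = (n - 1) * (n - 3) * (n - 4) * n)
    (hc : 2 * c = (n - 3) * (n - 4)) :
    Nonempty (SmithGroup (kneserLap n) ≃+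
      (ℤ × (Fin (n.choose 2 - 2 * n + 1) → ZMod a) ×
        (Fin (n - 2) → ZMod b) × ZMod c)) := by
  obtain ⟨k, rfl⟩ := Nat.exists_eq_add_of_le' hn
  have hV : (Finset.Icc 3 (k + 5)).card = k + 3 := by simp
  have hg : {3, 5} ∈ (Finset.Icc 3 (k + 5)).powersetCard 2 := by
    simp [Finset.mem_powersetCard, Finset.insert_subset_iff]
  have hf : {3, 4} ∈ (Finset.Icc 3 (k + 5)).powersetCard 2 := by
    simp [Finset.mem_powersetCard, Finset.insert_subset_iff]
  have hI : (freePairs (Finset.Icc 3 (k + 5)) {3, 4} {3, 5}).card =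
      (k + 5).choose 2 - 2 * (k + 5) + 1 := by
    rw [card_freePairs hg hf (by decide), hV, choose_add_three_two_sub_two]
  simp only [Nat.reduceSubDiff] at ha hb hc
  zify at ha hb hc
  have hb' : (b : ℤ) = a * (a + (k + 3)) := by
    refine mul_left_cancel₀ four_ne_zero ?_
    linear_combination hb - (2 * a + (k + 4) * (k + 1) + 2 * (k + 3)) * ha
  obtain ⟨Φ⟩ := nonempty_smithGroup_kneserLap_addEquiv (a := a) (b := b) (c := c)
    (insert_one_insert_two_Icc_three (by lia)) (by simp) (by simp) hg hf (by decide)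
    (by rw [hV]; push_cast; linear_combination ha) (by rw [hV, hb']; push_cast; rfl)
    (by rw [hV]; push_cast; linarith)
  exact ⟨Φ.trans <| (AddEquiv.refl ℤ).prodCongr <|
    (AddEquiv.arrowCongr (Finset.equivFinOfCardEq hI) (.refl _)).prodCongr <|
    (AddEquiv.arrowCongr (Finset.equivFinOfCardEq hV) (.refl _)).prodCongr (.refl _)⟩
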